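/- Let 𝒜 and ℬ be AD-families on ℕ such that the filters F_𝒜 and F_ℬ are FU-filters. If F_ℬ is an α₂-filter and F_𝒜 ≤_RK F_ℬ, then F_𝒜 is an α₂-filter. -/

import Mathlib

/-!
Let `f[G] = F` with `F` free and `G` Fréchet–Urysohn and α₂. If `C → F` then `f⁻¹(C)` is
`G`-positive, so it contains some `S → G`. Conversely, freeness of `F` makes the fibres of `f`
finite on every `S → G`, so `f(S)` is infinite and `f(S) → F`. Hence sets `Cₙ → F` lift to sets
`Sₙ → G` with `Sₙ ⊆ f⁻¹(Cₙ)`, and if `B → G` meets every `Sₙ` in an infinite set, then `f(B) → F`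
meets every `Cₙ` in an infinite set.
-/

open Set

/-- `f[G] = {A : f⁻¹(A) ∈ G}`, the image (Rudin–Keisler) filter of a family of sets. -/
def mapFilter {α β : Type*} (f : α → β) (G : Set (Set α)) : Set (Set β) := {A | f ⁻¹' A ∈ G}

/-- `F` is a (proper) filter of subsets. -/
def IsFilterFam {α : Type*} (F : Set (Set α)) : Prop :=
  Set.univ ∈ F ∧ (∀ A ∈ F, ∀ B : Set α, A ⊆ B → B ∈ F) ∧ (∀ A ∈ F, ∀ B ∈ F, A ∩ B ∈ F)

/-- A free filter: a proper filter containing all cofinite sets. -/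
def IsFreeFilter {α : Type*} (F : Set (Set α)) : Prop :=
  IsFilterFam F ∧ (∀ A : Set α, Aᶜ.Finite → A ∈ F) ∧ ∅ ∉ F

/-- `S → F` : `S` is an infinite set converging to the filter `F`, i.e. `S ⊆* A` for all `A ∈ F`. -/
def ConvTo {α : Type*} (S : Set α) (F : Set (Set α)) : Prop :=
  S.Infinite ∧ ∀ A ∈ F, (S \ A).Finite

/-- `F` is relatively equivalent to the Fréchet filter: some `A ∈ F` converges to `F`. -/
def RelFrechet {α : Type*} (F : Set (Set α)) : Prop := ∃ A ∈ F, ConvTo A F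

/-- Rudin–Keisler order: `F ≤_RK G` iff `f[G] = F` for some surjection `f`. -/
def RKle {α : Type*} (F G : Set (Set α)) : Prop :=
  ∃ f : α → α, Function.Surjective f ∧ mapFilter f G = F

/-- `F ≈ G` : there is a bijection `f` with `f[F] = G`. -/
def EquivFilter {α : Type*} (F G : Set (Set α)) : Prop :=
  ∃ f : α → α, Function.Bijective f ∧ mapFilter f F = G

/-- `F <_RK G` : `F ≤_RK G` and `¬ (F ≈ G)`. -/
def RKlt {α : Type*} (F G : Set (Set α)) : Prop := RKle F G ∧ ¬ EquivFilter F G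

/-- An AD-family: an infinite family of infinite sets with pairwise finite intersections. -/
def IsADFamily {α : Type*} (𝒜 : Set (Set α)) : Prop :=
  𝒜.Infinite ∧ (∀ A ∈ 𝒜, A.Infinite) ∧ ∀ A ∈ 𝒜, ∀ B ∈ 𝒜, A ≠ B → (A ∩ B).Finite

/-- The ideal generated by a family `𝒜`: sets almost covered by finitely many members of `𝒜`. -/
def idealGen {α : Type*} (𝒜 : Set (Set α)) : Set (Set α) :=
  {X | ∃ 𝒜' : Finset (Set α), ↑𝒜' ⊆ 𝒜 ∧ (X \ ⋃₀ ↑𝒜').Finite}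

/-- `S_𝒜`: the filter dual to the ideal generated by `𝒜`. -/
def SFam {α : Type*} (𝒜 : Set (Set α)) : Set (Set α) := {F | Fᶜ ∈ idealGen 𝒜}

/-- `F_𝒟 = {F : D ⊆* F for every D ∈ 𝒟}`. -/
def FFam {α : Type*} (𝒟 : Set (Set α)) : Set (Set α) := {F | ∀ D ∈ 𝒟, (D \ F).Finite}

/-- A nowhere MAD family: every set outside the generated ideal contains an infinite set
almost disjoint from every member of `𝒜`. -/
def IsNMAD {α : Type*} (𝒜 : Set (Set α)) : Prop :=
  IsADFamily 𝒜 ∧ ∀ X : Set α, X ∉ idealGen 𝒜 →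
    ∃ B ⊆ X, B.Infinite ∧ ∀ A ∈ 𝒜, (B ∩ A).Finite

/-- A partition of `ℕ` into infinitely many infinite sets. -/
def IsInfPartition (𝒬 : Set (Set ℕ)) : Prop :=
  𝒬.Infinite ∧ (∀ P ∈ 𝒬, P.Infinite) ∧ ⋃₀ 𝒬 = Set.univ ∧
    ∀ P ∈ 𝒬, ∀ Q ∈ 𝒬, P ≠ Q → P ∩ Q = ∅

/-- `F` is a Fréchet–Urysohn filter: every `F`-positive set contains a sequence converging to `F`. -/
def IsFUFilter {α : Type*} (F : Set (Set α)) : Prop :=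
  ∀ A : Set α, Aᶜ ∉ F → ∃ S ⊆ A, ConvTo S F

/-- The trace filter `F|_A = {G ∩ A : G ∈ F}`. -/
def traceFam {α : Type*} (F : Set (Set α)) (A : Set α) : Set (Set α) := {S | ∃ G ∈ F, S = G ∩ A}

/-- Todorčević–Uzcátegui order: there are `A ∈ G⁺`, `B ∈ F` and a bijection `f : A → B`
with `f[G|_A] = F|_B`. -/
def TUle {α : Type*} (F G : Set (Set α)) : Prop :=
  ∃ A : Set α, Aᶜ ∉ G ∧ ∃ B ∈ F, ∃ f : α → α, Set.BijOn f A B ∧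
    {Y : Set α | Y ⊆ B ∧ A ∩ f ⁻¹' Y ∈ traceFam G A} = traceFam F B

/-- An α₂-filter: for every sheaf there is a convergent set meeting every member infinitely. -/
def Alpha2 (F : Set (Set ℕ)) : Prop :=
  ∀ C : ℕ → Set ℕ, (∀ n, ConvTo (C n) F) →
    ∃ B : Set ℕ, ConvTo B F ∧ ∀ n, (C n ∩ B).Infinite

theorem mem_FFam_of_finite_compl {α : Type*} {A : Set α} (hA : Aᶜ.Finite) (𝒟 : Set (Set α)) :
    A ∈ FFam 𝒟 :=
  fun _ _ => hA.subset fun _ hx => hx.2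

section Convergence

variable {α β : Type*} {f : α → β} {F G : Set (Set α)} {S T : Set α}

theorem ConvTo.mono (hT : ConvTo T F) (hST : S ⊆ T) (hS : S.Infinite) : ConvTo S F :=
  ⟨hS, fun A hA => (hT.2 A hA).subset (sdiff_subset_sdiff_left hST)⟩

theorem ConvTo.compl_notMem (hS : ConvTo S F) : Sᶜ ∉ F := fun hmem =>
  hS.1 (by simpa only [sdiff_compl, inter_self] using hS.2 Sᶜ hmem)

theorem ConvTo.finite_inter_preimage_singleton {b : β} (hS : ConvTo S G)
    (hb : {b}ᶜ ∈ mapFilter f G) : (S ∩ f ⁻¹' {b}).Finite := by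
  simpa only [preimage_compl, sdiff_compl] using hS.2 _ hb

theorem ConvTo.image (hS : ConvTo S G) (hfree : ∀ b, {b}ᶜ ∈ mapFilter f G) :
    ConvTo (f '' S) (mapFilter f G) := by
  refine ⟨fun himage => hS.1 ?_, fun A hA => ?_⟩
  · exact himage.of_finite_fibers f fun b _ => hS.finite_inter_preimage_singleton (hfree b)
  · rw [← image_sdiff_preimage]
    exact (hS.2 _ hA).image f

theorem IsFUFilter.exists_convTo_subset_preimage {C : Set β} (hG : IsFUFilter G)
    (hC : ConvTo C (mapFilter f G)) : ∃ S ⊆ f ⁻¹' C, ConvTo S G :=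
  hG (f ⁻¹' C) hC.compl_notMem

end Convergence

theorem statement14_general {f : ℕ → ℕ} {G : Set (Set ℕ)} (hfree : ∀ k, {k}ᶜ ∈ mapFilter f G)
    (hFU : IsFUFilter G) (hα : Alpha2 G) : Alpha2 (mapFilter f G) := by
  intro C hC
  choose S hSC hS using fun n => hFU.exists_convTo_subset_preimage (hC n)
  obtain ⟨B, hB, hSB⟩ := hα S hS
  refine ⟨f '' B, hB.image hfree, fun n => ?_⟩
  have himage : (f '' (S n ∩ B)).Infinite :=
    ((hB.mono inter_subset_right (hSB n)).image hfree).1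
  have hsub : f '' (S n ∩ B) ⊆ C n ∩ f '' B :=
    (image_inter_subset f (S n) B).trans
      (inter_subset_inter_left _ (image_subset_iff.2 (hSC n)))
  exact himage.mono hsub

/-- The α₂ property is downward preserved by the RK-order among FU-filters. -/
theorem statement14 (𝒜 ℬ : Set (Set ℕ)) (h𝒜 : IsADFamily 𝒜) (hℬ : IsADFamily ℬ)
    (hFU𝒜 : IsFUFilter (FFam 𝒜)) (hFUℬ : IsFUFilter (FFam ℬ))
    (hα : Alpha2 (FFam ℬ)) (h : RKle (FFam 𝒜) (FFam ℬ)) : Alpha2 (FFam 𝒜) := by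
  obtain ⟨f, -, hf⟩ := h
  have hfree : ∀ k, {k}ᶜ ∈ FFam 𝒜 := fun k => mem_FFam_of_finite_compl (by simp) 𝒜
  rw [← hf] at hfree ⊢
  exact statement14_general hfree hFUℬ hα
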